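/- Let G be a finite directed graph with vertex set V and distinguished vertex r, let P be a rooted-hereditary property on G, and let W ⊆ V with r ∈ W. Then the number of maximal P-subgraphs of G[W] is at most the number of maximal P-subgraphs of G, i.e., |MaxSol_P(G[W])| ≤ |MaxSol_P(G)|. -/

import Mathlib

/-- `G[S]` is rooted at `r`: `r ∈ S` and every vertex of `S` is reachable from
`r` by a directed path inside the induced subgraph `G[S]`. -/
def RootedOn {V : Type*} (E : V → V → Prop) (r : V) (S : Set V) : Prop :=
  r ∈ S ∧ ∀ v ∈ S,
    Relation.ReflTransGen (fun a b => a ∈ S ∧ b ∈ S ∧ E a b) r v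

/-- `S` is a maximal `P`-subgraph of `G[W]`: `S ⊆ W`, `P S` holds, and no `T`
with `S ⊊ T ⊆ W` satisfies `P`. -/
def MaximalPIn {V : Type*} (P : Set V → Prop) (W S : Set V) : Prop :=
  S ⊆ W ∧ P S ∧ ∀ T : Set V, S ⊂ T → T ⊆ W → ¬ P T

/-!
Send each maximal `P`-subgraph of `G[W]` to a maximal `P`-subgraph of `G` containing it. This map is
injective: if `S` and `S'` lie in a common `P`-subgraph `M`, then `S ∪ S'` is again rooted, hence a
`P`-subgraph because `P` passes from `M` to its rooted subgraphs; as `S ∪ S' ⊆ W`, maximality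
of both sets forces `S = S ∪ S' = S'`.
-/

open Cardinal

section Order

variable {α : Type*} [SemilatticeSup α] {p : α → Prop} {a b c w : α}

/-- The predicate `p` is closed under joins of pairs that have a common upper bound satisfying `p`.
This is what remains of the rooted-hereditary condition once the graph is forgotten. -/
def BoundedSupClosed (p : α → Prop) : Prop :=
  ∀ ⦃a b c : α⦄, p a → p b → p c → a ≤ c → b ≤ c → p (a ⊔ b)

namespace BoundedSupClosed

theorem eq_of_maximal_of_le (hp : BoundedSupClosed p)
    (ha : Maximal (fun x ↦ p x ∧ x ≤ w) a) (hb : Maximal (fun x ↦ p x ∧ x ≤ w) b)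
    (hc : p c) (hac : a ≤ c) (hbc : b ≤ c) : a = b := by
  have hsup : p (a ⊔ b) ∧ a ⊔ b ≤ w :=
    ⟨hp ha.prop.1 hb.prop.1 hc hac hbc, sup_le ha.prop.2 hb.prop.2⟩
  calc
    a = a ⊔ b := ha.eq_of_le hsup le_sup_left
    _ = b := (hb.eq_of_le hsup le_sup_right).symm

theorem mk_maximal_and_le_le (hp : BoundedSupClosed p)
    (hmax : ∀ a, p a → ∃ m, a ≤ m ∧ Maximal p m) (w : α) :
    #{a | Maximal (fun x ↦ p x ∧ x ≤ w) a} ≤ #{m | Maximal p m} := by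
  choose! extend le_extend maximal_extend using hmax
  have mapsTo : Set.MapsTo extend {a | Maximal (fun x ↦ p x ∧ x ≤ w) a} {m | Maximal p m} :=
    fun a ha ↦ maximal_extend a ha.out.prop.1
  have injOn : Set.InjOn extend {a | Maximal (fun x ↦ p x ∧ x ≤ w) a} :=
    fun a ha b hb hab ↦
      hp.eq_of_maximal_of_le ha hb (mapsTo ha).out.prop (le_extend a ha.out.prop.1)
        ((le_extend b hb.out.prop.1).trans_eq hab.symm)
  exact mk_le_of_injective (mapsTo.restrict_inj.mpr injOn)

end BoundedSupClosed

end Order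

section RootedSubgraphs

variable {V : Type*} {E : V → V → Prop} {r : V} {P : Set V → Prop} {S T W : Set V}

theorem RootedOn.union (hS : RootedOn E r S) (hT : RootedOn E r T) : RootedOn E r (S ∪ T) := by
  refine ⟨Or.inl hS.1, ?_⟩
  rintro v (hv | hv)
  · exact Relation.ReflTransGen.mono (fun a b ⟨ha, hb, hab⟩ ↦ ⟨Or.inl ha, Or.inl hb, hab⟩) _ _
      (hS.2 v hv)
  · exact Relation.ReflTransGen.mono (fun a b ⟨ha, hb, hab⟩ ↦ ⟨Or.inr ha, Or.inr hb, hab⟩) _ _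
      (hT.2 v hv)

theorem maximalPIn_iff_maximal : MaximalPIn P W S ↔ Maximal (fun T ↦ P T ∧ T ⊆ W) S := by
  simp only [MaximalPIn, maximal_iff_forall_gt]
  grind

theorem maximalPIn_univ_iff_maximal : MaximalPIn P Set.univ S ↔ Maximal P S := by
  simp only [maximalPIn_iff_maximal, Set.subset_univ, and_true]

/-- A property of induced subgraphs is rooted-hereditary if it holds only for subgraphs rooted
at `r`, and passes from a subgraph to each of its rooted induced subgraphs. -/
structure RootedHereditary (E : V → V → Prop) (r : V) (P : Set V → Prop) : Prop where
  rootedOn : ∀ S : Set V, P S → RootedOn E r S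
  of_subset : ∀ S T : Set V, P S → T ⊆ S → RootedOn E r T → P T

theorem RootedHereditary.boundedSupClosed (hP : RootedHereditary E r P) : BoundedSupClosed P :=
  fun S T M hS hT hM hSM hTM ↦
    hP.of_subset M (S ∪ T) hM (Set.union_subset hSM hTM)
      ((hP.rootedOn S hS).union (hP.rootedOn T hT))

theorem card_maxSol_rooted_restriction_le_general (hP : RootedHereditary E r P)
    (hmax : ∀ S, P S → ∃ M, S ⊆ M ∧ MaximalPIn P Set.univ M) (W : Set V) :
    #{S | MaximalPIn P W S} ≤ #{S | MaximalPIn P Set.univ S} := by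
  simp only [maximalPIn_univ_iff_maximal] at hmax ⊢
  simp only [maximalPIn_iff_maximal]
  exact hP.boundedSupClosed.mk_maximal_and_le_le hmax W

theorem exists_subset_maximalPIn_univ [Finite V] (hS : P S) :
    ∃ M, S ⊆ M ∧ MaximalPIn P Set.univ M := by
  simp only [maximalPIn_univ_iff_maximal]
  exact Finite.exists_le_maximal hS

end RootedSubgraphs

/-- for a rooted-hereditary property `P` on a finite directed
graph `G = (V, E, r)` and `W ⊆ V` with `r ∈ W`, the number of maximal
`P`-subgraphs of `G[W]` is at most the number of maximal `P`-subgraphs of `G`. -/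
theorem card_maxSol_rooted_restriction_le {V : Type*} [Fintype V]
    (E : V → V → Prop) (r : V) (P : Set V → Prop)
    (hrooted₁ : ∀ S : Set V, P S → RootedOn E r S)
    (hrooted₂ : ∀ S T : Set V, P S → T ⊆ S → RootedOn E r T → P T)
    (W : Set V) (hrW : r ∈ W) :
    {S : Set V | MaximalPIn P W S}.ncard ≤
      {S : Set V | MaximalPIn P Set.univ S}.ncard :=
  Cardinal.toNat_le_toNat (card_maxSol_rooted_restriction_le_general ⟨hrooted₁, hrooted₂⟩
    (fun _ ↦ exists_subset_maximalPIn_univ) W) (lt_aleph0_of_finite _)
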